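/- Let Γ be a 3-crystallographic group and let G ≤ Γ be a subgroup that leaves invariant a line l in ℝ³ and acts cocompactly on l purely by translations (every element of G restricts to a translation of l). Then G is isomorphic to one of the following groups: ℤ; ℤ₂×ℤ; ℤ₃×ℤ; ℤ₃⋊_φℤ; ℤ₄×ℤ; ℤ₄⋊_φℤ; ℤ₆×ℤ; ℤ₆⋊_φℤ; D₂×ℤ; D₂⋊_φℤ with φ of order 2 in Out(D₂); D₃×ℤ; D₄×ℤ; D₄⋊_φℤ; D₆×ℤ; D₆⋊_φℤ — where in each semidirect product F⋊_φℤ the automorphism φ represents the nontrivial element (for D₂, an order-2 element) of the outer automorphism group Out(F) (for cyclic F, φ is inversion). -/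

import Mathlib

noncomputable section

/-- Euclidean `n`-space. -/
abbrev E (n : ℕ) := EuclideanSpace ℝ (Fin n)

/-- The isometry group of Euclidean `n`-space (which equals `O(n) ⋉ ℝⁿ`). -/
abbrev Isom (n : ℕ) := E n ≃ᵢ E n

/-- A subgroup of the isometry group of `ℝⁿ` is `n`-crystallographic if its action on `ℝⁿ`
is properly discontinuous and cocompact. -/
def IsCrystallographic {n : ℕ} (Γ : Subgroup (Isom n)) : Prop :=
  (∀ K L : Set (E n), IsCompact K → IsCompact L →
      {γ : Isom n | γ ∈ Γ ∧ (γ '' K ∩ L).Nonempty}.Finite) ∧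
  ∃ K : Set (E n), IsCompact K ∧ ∀ x : E n, ∃ γ ∈ Γ, γ x ∈ K

/-- A line in `ℝⁿ`: a one-dimensional affine subspace. -/
def IsLine {n : ℕ} (l : Set (E n)) : Prop :=
  ∃ p v : E n, v ≠ 0 ∧ l = {x | ∃ t : ℝ, x = p + t • v}

/-- A group is virtually infinite cyclic if it contains an infinite cyclic subgroup of
finite index. -/
def IsVirtuallyInfiniteCyclic (G : Type*) [Group G] : Prop :=
  ∃ H : Subgroup G, H.FiniteIndex ∧ Nonempty (H ≃* Multiplicative ℤ)

/-- The cyclic group of order `i`. -/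
abbrev Zc (i : ℕ) := Multiplicative (ZMod i)

/-- The semidirect product `F ⋊_ψ ℤ` in which the generator of `ℤ` acts on `F` by the
automorphism `ψ`. -/
abbrev SdZ (F : Type) [Group F] (ψ : MulAut F) : Type :=
  F ⋊[zpowersHom (MulAut F) ψ] Multiplicative ℤ

/-- `ψ` is an inner automorphism. -/
def IsInner {F : Type} [Group F] (ψ : MulAut F) : Prop :=
  ∃ g : F, ψ = MulAut.conj g

/-!
By the Zassenhaus–Frobenius commutator argument, an element of `Γ` whose linear part is close to
the identity is a translation. Such elements occur near every point of space, so no nontrivial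
linear part of an element of `Γ` fixes all translation vectors of `Γ`. Hence an element of `Γ`
that rotates a plane moves some translation vector by a nonzero vector of that plane, and its
angle satisfies the crystallographic restriction.

The translation lengths of `G` along `l` form an infinite cyclic group, so `G` is an extension of
`ℤ` by the finite group `F` of elements fixing `l` pointwise, and it splits. As `F` acts
faithfully on the plane orthogonal to `l`, it is cyclic or dihedral with rotation subgroup of
order 1, 2, 3, 4 or 6, and `F ⋊_φ ℤ` is a direct product when `φ` is inner. For `F = D₂`, where
`Out F` is not of order two, `φ` preserves the rotation subgroup and thus has order at most 2.
-/

section IntegerExtensions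

open SemidirectProduct

/-- The splitting of an extension by `ℤ` that sends the generator of `ℤ` to a given lift `t`. -/
def splittingOfLift {M G : Type*} [Group M] [Group G]
    (S : GroupExtension M G (Multiplicative ℤ)) (t : G)
    (ht : S.rightHom t = Multiplicative.ofAdd 1) : S.Splitting where
  __ := zpowersHom G t
  rightInverse_rightHom n := by
    change S.rightHom (t ^ n.toAdd) = n
    rw [map_zpow, ht, ← ofAdd_zsmul, smul_eq_mul, mul_one, ofAdd_toAdd]

theorem nonempty_mulEquiv_sdZ {M : Type} [Group M] {G : Type*} [Group G]
    (S : GroupExtension M G (Multiplicative ℤ)) {t : G}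
    (ht : S.rightHom t = Multiplicative.ofAdd 1) : Nonempty (G ≃* SdZ M (S.conjAct t)) := by
  have hact : (splittingOfLift S t ht).conjAct =
      zpowersHom (MulAut M) (S.conjAct t) :=
    MonoidHom.ext_mint (by
      change S.conjAct (t ^ (1 : ℤ)) = S.conjAct t ^ (1 : ℤ)
      rw [zpow_one, zpow_one])
  exact ⟨(hact ▸ (splittingOfLift S t ht).semidirectProductMulEquiv).symm⟩

theorem nonempty_sdZ_one_mulEquiv_prod (M : Type) [Group M] :
    Nonempty (SdZ M 1 ≃* M × Multiplicative ℤ) := by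
  have h : zpowersHom (MulAut M) 1 = 1 := MonoidHom.ext_mint (zpow_one 1)
  unfold SdZ
  rw [h]
  exact ⟨mulEquivProd⟩

theorem nonempty_sdZ_mulEquiv_prod {M : Type} [Group M] {ψ : MulAut M} (hψ : IsInner ψ) :
    Nonempty (SdZ M ψ ≃* M × Multiplicative ℤ) := by
  obtain ⟨g, rfl⟩ := hψ
  let S := toGroupExtension (zpowersHom (MulAut M) (MulAut.conj g))
  let t : SdZ M (MulAut.conj g) := inl g⁻¹ * inr (Multiplicative.ofAdd 1)
  have ht : S.conjAct t = 1 := by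
    ext m
    apply S.inl_injective
    rw [S.inl_conjAct_comm]
    ext <;> simp [S, t, toGroupExtension, mul_assoc]
  obtain ⟨e⟩ := nonempty_mulEquiv_sdZ S (t := t) (by simp [S, t, toGroupExtension])
  rw [ht] at e
  exact (nonempty_sdZ_one_mulEquiv_prod M).map e.trans

theorem nonempty_mulEquiv_prod_or_not_isInner {M : Type} [Group M] {ψ : MulAut M} {G : Type*}
    [Group G] (e : G ≃* SdZ M ψ) :
    Nonempty (G ≃* M × Multiplicative ℤ) ∨
      ∃ ψ : MulAut M, ¬ IsInner ψ ∧ Nonempty (G ≃* SdZ M ψ) := by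
  by_cases hψ : IsInner ψ
  · exact .inl ((nonempty_sdZ_mulEquiv_prod hψ).map e.trans)
  · exact .inr ⟨ψ, hψ, ⟨e⟩⟩

end IntegerExtensions

section Automorphisms

open DihedralGroup

theorem mulAut_zc_eq_one_or_inv {n : ℕ} (hn : ∀ u : (ZMod n)ˣ, u = 1 ∨ u = -1)
    (ψ : MulAut (Zc n)) : ψ = 1 ∨ ψ = MulEquiv.inv (Zc n) := by
  let Φ : MulAut (Zc n) ≃* (ZMod n)ˣ := (MulAutMultiplicative (ZMod n)).trans
    (ZMod.AddAutEquivUnits n).toMultiplicative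
  have hinv : Φ (MulEquiv.inv (Zc n)) = -1 := Units.ext rfl
  rw [← Φ.injective.eq_iff, ← Φ.injective.eq_iff, map_one, hinv]
  exact hn (Φ ψ)

theorem inv_zc_two_eq_one : (MulEquiv.inv (Zc 2) : MulAut (Zc 2)) = 1 :=
  MulEquiv.ext (by decide)

theorem dihedralGroup_hom_ext {n : ℕ} {M : Type*} [Group M] {f g : DihedralGroup n →* M}
    (hr : f (r 1) = g (r 1)) (hs : f (sr 0) = g (sr 0)) : f = g := by
  have h (j : ZMod n) : f (r j) = g (r j) := by
    obtain ⟨k, rfl⟩ := ZMod.intCast_surjective j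
    rw [← r_one_zpow, map_zpow, map_zpow, hr]
  ext (j | j)
  · exact h j
  · rw [← zero_add j, ← sr_mul_r, map_mul, map_mul, hs, h]

theorem mulAut_dihedralGroup_one_eq_one (ψ : MulAut (DihedralGroup 1)) : ψ = 1 := by
  have hr : (r 1 : DihedralGroup 1) = 1 := by decide
  have hs : ∀ b : DihedralGroup 1, b ≠ 1 → b = sr 0 := by decide
  refine MulEquiv.toMonoidHom_injective (dihedralGroup_hom_ext ?_ ?_)
  · exact (congrArg ψ hr).trans ((map_one ψ).trans hr.symm)
  · exact hs (ψ (sr 0)) (by rw [Ne, EmbeddingLike.map_eq_one_iff]; decide)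

theorem isInner_mulAut_dihedralGroup_three (ψ : MulAut (DihedralGroup 3)) : IsInner ψ := by
  have key : ∀ a b : DihedralGroup 3, a ≠ 1 → a ^ 3 = 1 → b ≠ 1 → b ^ 2 = 1 →
      ∃ g : DihedralGroup 3, a = g * r 1 * g⁻¹ ∧ b = g * sr 0 * g⁻¹ := by decide
  obtain ⟨g, hr, hs⟩ := key (ψ (r 1)) (ψ (sr 0))
    (by rw [Ne, EmbeddingLike.map_eq_one_iff]; decide)
    (by rw [← map_pow, EmbeddingLike.map_eq_one_iff]; decide)
    (by rw [Ne, EmbeddingLike.map_eq_one_iff]; decide)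
    (by rw [← map_pow, EmbeddingLike.map_eq_one_iff]; decide)
  exact ⟨g, MulEquiv.toMonoidHom_injective (dihedralGroup_hom_ext hr hs)⟩

theorem sq_mulAut_dihedralGroup_two_eq_one {ψ : MulAut (DihedralGroup 2)}
    (h : ψ (r 1) ∈ Subgroup.zpowers (r 1)) : ψ ^ 2 = 1 := by
  have hr : ψ (r 1) = r 1 := by
    obtain ⟨k, hk⟩ := Subgroup.mem_zpowers_iff.1 h
    rw [r_one_zpow] at hk
    have h1 : ψ (r 1) ≠ r 0 := (EmbeddingLike.map_eq_one_iff (f := ψ)).not.2 (by decide)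
    rw [← hk] at h1 ⊢
    clear hk
    generalize (k : ZMod 2) = j at h1 ⊢
    revert j
    decide
  have key : ∀ b : DihedralGroup 2, b ≠ 1 → b ≠ r 1 → b = sr 0 ∨ b = sr 0 * r 1 := by decide
  refine MulEquiv.toMonoidHom_injective (dihedralGroup_hom_ext (congrArg ψ hr |>.trans hr) ?_)
  change ψ (ψ (sr 0)) = sr 0
  obtain hs | hs := key (ψ (sr 0)) (by rw [Ne, EmbeddingLike.map_eq_one_iff]; decide)
    (by rw [← hr, Ne, EmbeddingLike.apply_eq_iff_eq]; decide)
  · rw [hs, hs]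
  · rw [hs, map_mul, hr, hs]
    decide

end Automorphisms

section SmallKernels

variable {G : Type*} [Group G]

theorem nonempty_mulEquiv_int {ψ : MulAut (Zc 1)} (e : G ≃* SdZ (Zc 1) ψ) :
    Nonempty (G ≃* Multiplicative ℤ) := by
  have hψ : IsInner ψ := ⟨1, MulEquiv.ext fun _ => Subsingleton.elim _ _⟩
  exact (nonempty_sdZ_mulEquiv_prod hψ).map fun f => (e.trans f).trans MulEquiv.uniqueProd

theorem nonempty_mulEquiv_prod_or_sdZ_inv {n : ℕ} (hn : ∀ u : (ZMod n)ˣ, u = 1 ∨ u = -1)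
    {ψ : MulAut (Zc n)} (e : G ≃* SdZ (Zc n) ψ) :
    Nonempty (G ≃* Zc n × Multiplicative ℤ) ∨
      Nonempty (G ≃* SdZ (Zc n) (MulEquiv.inv (Zc n))) := by
  obtain rfl | rfl := mulAut_zc_eq_one_or_inv hn ψ
  · exact .inl ((nonempty_sdZ_one_mulEquiv_prod _).map e.trans)
  · exact .inr ⟨e⟩

theorem nonempty_mulEquiv_zc_two_prod {ψ : MulAut (Zc 2)} (e : G ≃* SdZ (Zc 2) ψ) :
    Nonempty (G ≃* Zc 2 × Multiplicative ℤ) := by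
  have hψ : ψ = 1 := by simpa [inv_zc_two_eq_one] using mulAut_zc_eq_one_or_inv (by decide) ψ
  subst hψ
  exact (nonempty_sdZ_one_mulEquiv_prod _).map e.trans

theorem nonempty_mulEquiv_zc_two_prod_of_dihedralGroup_one {ψ : MulAut (DihedralGroup 1)}
    (e : G ≃* SdZ (DihedralGroup 1) ψ) : Nonempty (G ≃* Zc 2 × Multiplicative ℤ) := by
  have hcyc : Zc (Nat.card (DihedralGroup 1)) ≃* DihedralGroup 1 :=
    zmodCyclicMulEquiv (DihedralGroup.isCyclic_iff.2 rfl)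
  rw [DihedralGroup.nat_card] at hcyc
  rw [mulAut_dihedralGroup_one_eq_one ψ] at e
  exact (nonempty_sdZ_one_mulEquiv_prod _).map fun f =>
    (e.trans f).trans (hcyc.symm.prodCongr (MulEquiv.refl _))

theorem nonempty_mulEquiv_prod_or_orderOf_eq_two {ψ : MulAut (DihedralGroup 2)}
    (hψ : ψ (.r 1) ∈ Subgroup.zpowers (.r 1)) (e : G ≃* SdZ (DihedralGroup 2) ψ) :
    Nonempty (G ≃* DihedralGroup 2 × Multiplicative ℤ) ∨
      ∃ ψ : MulAut (DihedralGroup 2), orderOf ψ = 2 ∧ Nonempty (G ≃* SdZ (DihedralGroup 2) ψ) := by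
  by_cases h1 : ψ = 1
  · subst h1
    exact .inl ((nonempty_sdZ_one_mulEquiv_prod _).map e.trans)
  · exact .inr ⟨ψ, orderOf_eq_prime (sq_mulAut_dihedralGroup_two_eq_one hψ) h1, ⟨e⟩⟩

theorem nonempty_mulEquiv_dihedralGroup_three_prod {ψ : MulAut (DihedralGroup 3)}
    (e : G ≃* SdZ (DihedralGroup 3) ψ) : Nonempty (G ≃* DihedralGroup 3 × Multiplicative ℤ) :=
  (nonempty_sdZ_mulEquiv_prod (isInner_mulAut_dihedralGroup_three ψ)).map e.trans

end SmallKernels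

section DihedralGroups

open DihedralGroup Subgroup

theorem mem_zpowers_r_one_iff {n : ℕ} {x : DihedralGroup n} :
    x ∈ zpowers (r 1) ↔ ∃ j, x = r j := by
  simp only [mem_zpowers_iff, r_one_zpow, ZMod.intCast_surjective.exists, eq_comm]

variable {G : Type*} [Group G]

section Lift

variable {n : ℕ} (f : Zc n →* G) {s : G} (hs : s * s = 1) (hf : ∀ j, s * f j = (f j)⁻¹ * s)

/-- The homomorphism from the dihedral group given by `f` on rotations and by `s` on a
reflection. -/
def dihedralLift : DihedralGroup n →* G where
  toFun
    | r j => f (Multiplicative.ofAdd j)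
    | sr j => s * f (Multiplicative.ofAdd j)
  map_one' := map_one f
  map_mul' := by
    have hf' (j : Zc n) : f j * s = s * (f j)⁻¹ := by rw [← map_inv, hf, map_inv, inv_inv]
    rintro (i | i) (j | j) <;>
      simp only [r_mul_r, r_mul_sr, sr_mul_r, sr_mul_sr, sub_eq_neg_add, ofAdd_add, ofAdd_neg,
        map_mul, map_inv]
    · rw [← mul_assoc, ← mul_assoc, hf']
    · rw [mul_assoc]
    · rw [mul_assoc s, ← mul_assoc _ s, hf', ← mul_assoc, ← mul_assoc, hs, one_mul]

theorem dihedralLift_injective (hinj : Function.Injective f) (hsf : s ∉ f.range) :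
    Function.Injective (dihedralLift f hs hf) := by
  refine (injective_iff_map_eq_one _).2 ?_
  rintro (j | j) hj
  · exact congrArg r (hinj (hj.trans (map_one f).symm))
  · have hsj : s = (f (Multiplicative.ofAdd j))⁻¹ := eq_inv_of_mul_eq_one_left hj
    exact absurd ⟨_, (map_inv f _).trans hsj.symm⟩ hsf

theorem dihedralLift_surjective (hsf : ∀ x, s * x ∈ f.range ∨ x ∈ f.range) :
    Function.Surjective (dihedralLift f hs hf) := fun x => by
  obtain ⟨j, hj⟩ | ⟨j, hj⟩ := hsf x
  · refine ⟨sr j.toAdd, (congrArg (s * ·) hj).trans ?_⟩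
    rw [← mul_assoc, hs, one_mul]
  · exact ⟨r j.toAdd, hj⟩

end Lift

theorem exists_dihedralGroup_mulEquiv (R : Subgroup G) [IsCyclic R] (hR : R.index = 2)
    (hinv : ∀ x ∉ R, x * x = 1) :
    ∃ e : DihedralGroup (Nat.card R) ≃* G, ∀ x, e x ∈ R ↔ x ∈ zpowers (r 1) := by
  obtain ⟨s, hs, hcover⟩ := index_eq_two_iff_exists_notMem_and'.1 hR
  let c : Zc (Nat.card R) ≃* R := zmodCyclicMulEquiv inferInstance
  let f : Zc (Nat.card R) →* G := R.subtype.comp c.toMonoidHom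
  have hfR : f.range = R := by
    ext x
    refine ⟨?_, fun hx => ⟨c.symm ⟨x, hx⟩, congrArg Subtype.val (c.apply_symm_apply _)⟩⟩
    rintro ⟨j, rfl⟩
    exact (c j).2
  have hsR (j) : s * f j ∉ R := fun h => hs ((R.mul_mem_cancel_right (c j).2).1 h)
  have hf (j) : s * f j = (f j)⁻¹ * s := by
    rw [eq_inv_mul_iff_mul_eq, ← mul_right_inj s, hinv s hs, ← mul_assoc]
    simpa only [mul_assoc] using hinv _ (hsR j)
  refine ⟨MulEquiv.ofBijective (dihedralLift f (hinv s hs) hf)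
    ⟨dihedralLift_injective _ _ _ (R.subtype_injective.comp c.injective) (by rwa [hfR]),
      dihedralLift_surjective _ _ _ (by rwa [hfR])⟩, ?_⟩
  rintro (j | j)
  · exact iff_of_true (c j).2 (mem_zpowers_r_one_iff.2 ⟨j, rfl⟩)
  · exact iff_of_false (hsR j) (by simp [mem_zpowers_r_one_iff])

end DihedralGroups

section PlaneIsometries

open ComplexConjugate Subgroup

theorem exists_eq_rotation_mul_conjLIE {f : ℂ ≃ₗᵢ[ℝ] ℂ} (hf : f ∉ rotation.range) :
    ∃ a, f = rotation a * Complex.conjLIE := by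
  obtain ⟨a, rfl | rfl⟩ := linear_isometry_complex f
  · exact absurd ⟨a, rfl⟩ hf
  · exact ⟨a, rfl⟩

theorem mul_self_eq_one_of_notMem_range_rotation {f : ℂ ≃ₗᵢ[ℝ] ℂ} (hf : f ∉ rotation.range) :
    f * f = 1 := by
  obtain ⟨a, rfl⟩ := exists_eq_rotation_mul_conjLIE hf
  ext z
  change (a : ℂ) * conj (a * conj z) = z
  rw [map_mul, Complex.conj_conj, ← mul_assoc, Complex.mul_conj, Circle.normSq_coe,
    Complex.ofReal_one, one_mul]

theorem index_range_rotation : rotation.range.index = 2 := by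
  refine index_eq_two_iff_exists_notMem_and.2 ⟨Complex.conjLIE, ?_, fun f => ?_⟩
  · rintro ⟨a, ha⟩
    exact rotation_ne_conjLIE a ha
  · refine or_iff_not_imp_right.2 fun hf => ?_
    obtain ⟨a, rfl⟩ := exists_eq_rotation_mul_conjLIE hf
    exact ⟨a, by ext z; simp⟩

instance normal_range_rotation : rotation.range.Normal :=
  normal_of_index_eq_two index_range_rotation

variable {F : Type*} [Group F] [Finite F] {σ : F →* (ℂ ≃ₗᵢ[ℝ] ℂ)}

theorem isCyclic_comap_range_rotation (hσ : Function.Injective σ) :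
    IsCyclic (rotation.range.comap σ) := by
  let θ : rotation.range ≃* Circle := (MonoidHom.ofInjective rotation_injective).symm
  exact isCyclic_of_injective_ringHom
    (Circle.coeHom.comp (θ.toMonoidHom.comp (σ.subgroupComap rotation.range)))
    (Circle.coe_injective.comp (θ.injective.comp fun x y h =>
      Subtype.ext (hσ (congrArg Subtype.val h))))

theorem zc_or_dihedralGroup_of_injective (hσ : Function.Injective σ) :
    Nonempty (Zc (Nat.card (rotation.range.comap σ)) ≃* F) ∨
      ∃ e : DihedralGroup (Nat.card (rotation.range.comap σ)) ≃* F,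
        ∀ x, σ (e x) ∈ rotation.range ↔ x ∈ zpowers (.r 1) := by
  have := isCyclic_comap_range_rotation hσ
  by_cases h : rotation.range.comap σ = ⊤
  · exact .inl ⟨(zmodCyclicMulEquiv this).trans ((MulEquiv.subgroupCongr h).trans topEquiv)⟩
  · refine .inr (exists_dihedralGroup_mulEquiv _ ?_ fun x hx => hσ ?_)
    · refine ((Nat.dvd_prime Nat.prime_two).1 ?_).resolve_left (mt index_eq_one.1 h)
      rw [index_comap, ← index_range_rotation]
      exact relIndex_dvd_index_of_normal _ _
    · rw [map_mul, map_one, mul_self_eq_one_of_notMem_range_rotation hx]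

theorem natCard_mem_of_pow_eq_one {R : Type*} [Group R] [IsCyclic R]
    (h : ∀ x : R, x ^ 4 = 1 ∨ x ^ 6 = 1) : Nat.card R ∈ ({1, 2, 3, 4, 6} : Set ℕ) := by
  obtain ⟨g, hg⟩ := IsCyclic.exists_ofOrder_eq_natCard (α := R)
  have hdvd : Nat.card R ∣ 4 ∨ Nat.card R ∣ 6 := by
    rw [← hg, orderOf_dvd_iff_pow_eq_one, orderOf_dvd_iff_pow_eq_one]
    exact h g
  have hle : Nat.card R ≤ 6 := by
    rcases hdvd with h | h <;> have := Nat.le_of_dvd (by norm_num) h <;> omega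
  generalize Nat.card R = n at hdvd hle
  interval_cases n <;> revert hdvd <;> decide

end PlaneIsometries

section PlanarExtensions

open DihedralGroup Subgroup

/-- The extension of `ℤ` by `M` given by a surjection onto `ℤ` and an identification of its kernel
with `M`. -/
def extensionOfKerEquiv {M G : Type*} [Group M] [Group G] (τ : G →* Multiplicative ℤ)
    (hτ : Function.Surjective τ) (e : M ≃* τ.ker) : GroupExtension M G (Multiplicative ℤ) where
  inl := τ.ker.subtype.comp e.toMonoidHom
  rightHom := τ
  inl_injective := τ.ker.subtype_injective.comp e.injective
  range_inl_eq_ker_rightHom := by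
    ext x
    refine ⟨?_, fun hx => ⟨e.symm ⟨x, hx⟩, congrArg Subtype.val (e.apply_symm_apply _)⟩⟩
    rintro ⟨m, rfl⟩
    exact (e m).2
  rightHom_surjective := hτ

theorem exists_mulEquiv_sdZ_of_ker_equiv {M : Type} [Group M] {G : Type*} [Group G]
    {τ : G →* Multiplicative ℤ} (hτ : Function.Surjective τ) (e : M ≃* τ.ker) :
    ∃ (t : G) (ψ : MulAut M), (∀ m, (e (ψ m) : G) = t * e m * t⁻¹) ∧ Nonempty (G ≃* SdZ M ψ) := by
  obtain ⟨t, ht⟩ := hτ (Multiplicative.ofAdd 1)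
  exact ⟨t, (extensionOfKerEquiv τ hτ e).conjAct t,
    fun m => (extensionOfKerEquiv τ hτ e).inl_conjAct_comm, nonempty_mulEquiv_sdZ _ ht⟩

theorem exists_mulEquiv_sdZ_of_planar {G : Type*} [Group G] {τ : G →* Multiplicative ℤ}
    (hτ : Function.Surjective τ) [Finite τ.ker] (ρ : G →* (ℂ ≃ₗᵢ[ℝ] ℂ))
    (hinj : ∀ g ∈ τ.ker, ρ g = 1 → g = 1)
    (hrot : ∀ g ∈ τ.ker, ρ g ∈ rotation.range → g ^ 4 = 1 ∨ g ^ 6 = 1) :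
    ∃ n ∈ ({1, 2, 3, 4, 6} : Set ℕ), (∃ ψ, Nonempty (G ≃* SdZ (Zc n) ψ)) ∨
      ∃ ψ : MulAut (DihedralGroup n), ψ (r 1) ∈ zpowers (r 1) ∧
        Nonempty (G ≃* SdZ (DihedralGroup n) ψ) := by
  let σ : τ.ker →* (ℂ ≃ₗᵢ[ℝ] ℂ) := ρ.comp τ.ker.subtype
  have hσ : Function.Injective σ :=
    (injective_iff_map_eq_one σ).2 fun x hx => Subtype.ext (hinj x x.2 hx)
  have := isCyclic_comap_range_rotation hσ
  refine ⟨Nat.card (rotation.range.comap σ), natCard_mem_of_pow_eq_one fun x => ?_, ?_⟩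
  · exact (hrot x x.1.2 x.2).imp (fun h => Subtype.ext (Subtype.ext h))
      fun h => Subtype.ext (Subtype.ext h)
  obtain ⟨⟨e⟩⟩ | ⟨e, he⟩ := zc_or_dihedralGroup_of_injective hσ
  · obtain ⟨t, ψ, -, hG⟩ := exists_mulEquiv_sdZ_of_ker_equiv hτ e
    exact .inl ⟨ψ, hG⟩
  · obtain ⟨t, ψ, hψ, hG⟩ := exists_mulEquiv_sdZ_of_ker_equiv hτ e
    refine .inr ⟨ψ, (he _).1 ?_, hG⟩
    change ρ (e (ψ (r 1))) ∈ _
    rw [hψ, map_mul, map_mul, map_inv]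
    exact normal_range_rotation.conj_mem _ ((he (r 1)).2 (mem_zpowers _)) _

end PlanarExtensions

section Deviation

open scoped commutatorElement

theorem commutatorElement_pow_left {G : Type*} [Group G] {a b : G} (h : Commute a ⁅a, b⁆)
    (n : ℕ) : ⁅a ^ n, b⁆ = ⁅a, b⁆ ^ n := by
  induction n with
  | zero => simp
  | succ n ih =>
    calc ⁅a ^ (n + 1), b⁆ = a ^ n * ⁅a, b⁆ * (b * (a ^ n)⁻¹ * b⁻¹) := by
          simp only [commutatorElement_def, pow_succ]; group
      _ = ⁅a, b⁆ * ⁅a ^ n, b⁆ := by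
          rw [(h.pow_left n).eq, commutatorElement_def (a ^ n) b]; group
      _ = ⁅a, b⁆ ^ (n + 1) := by rw [ih, pow_succ']

-- The supremum `s` of `‖c ^ n - 1‖` satisfies `2 * s ≤ s + δ * s`, by squaring.
theorem eq_one_of_norm_pow_sub_one_le {R : Type*} [NormedRing R] [NormedAlgebra ℝ R]
    {c : R} {δ : ℝ} (hδ : δ < 1) (h : ∀ n : ℕ, ‖c ^ n - 1‖ ≤ δ) : c = 1 := by
  set s := ⨆ n : ℕ, ‖c ^ n - 1‖
  have hle (n : ℕ) : ‖c ^ n - 1‖ ≤ s := le_ciSup ⟨δ, Set.forall_mem_range.2 h⟩ n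
  have hsquare (n : ℕ) : 2 * ‖c ^ n - 1‖ ≤ ‖c ^ (n * 2) - 1‖ + ‖c ^ n - 1‖ * ‖c ^ n - 1‖ :=
    calc 2 * ‖c ^ n - 1‖ = ‖(c ^ (n * 2) - 1) - (c ^ n - 1) * (c ^ n - 1)‖ := by
          rw [← Real.norm_ofNat, ← norm_smul, ofNat_smul_eq_nsmul, pow_mul]
          congr 1
          noncomm_ring
      _ ≤ _ := (norm_sub_le _ _).trans (by gcongr; exact norm_mul_le _ _)
  have hs : s ≤ (1 + δ) / 2 * s := ciSup_le fun n => by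
    nlinarith [hsquare n, hle (n * 2), hle n, h n, norm_nonneg (c ^ n - 1)]
  have hc : ‖c - 1‖ ≤ 0 := by
    have := hle 1
    rw [pow_one] at this
    nlinarith
  exact sub_eq_zero.1 (norm_le_zero_iff.1 hc)

variable {V : Type*} [NormedAddCommGroup V] [NormedSpace ℝ V]

/-- The embedding of the group of linear isometries into the ring of bounded operators. -/
def operatorHom : (V ≃ₗᵢ[ℝ] V) →* (V →L[ℝ] V) where
  toFun A := (A.toContinuousLinearEquiv : V →L[ℝ] V)
  map_one' := rfl
  map_mul' _ _ := rfl

theorem norm_operatorHom_le (A : V ≃ₗᵢ[ℝ] V) : ‖operatorHom A‖ ≤ 1 :=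
  ContinuousLinearMap.opNorm_le_bound _ zero_le_one fun x =>
    ((A.norm_map x).trans (one_mul _).symm).le

theorem operatorHom_mul_inv (A : V ≃ₗᵢ[ℝ] V) : operatorHom A * operatorHom A⁻¹ = 1 := by
  rw [← map_mul, mul_inv_cancel, map_one]

theorem norm_mul_operatorHom_le (x : V →L[ℝ] V) (A : V ≃ₗᵢ[ℝ] V) : ‖x * operatorHom A‖ ≤ ‖x‖ :=
  (norm_mul_le _ _).trans (mul_le_of_le_one_right (norm_nonneg _) (norm_operatorHom_le A))

theorem norm_operatorHom_mul_le (x : V →L[ℝ] V) (A : V ≃ₗᵢ[ℝ] V) : ‖operatorHom A * x‖ ≤ ‖x‖ :=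
  (norm_mul_le _ _).trans (mul_le_of_le_one_left (norm_nonneg _) (norm_operatorHom_le A))

/-- The distance of a linear isometry from the identity in operator norm; it measures how close
the linear part of an isometry is to that of a translation. -/
def deviation (A : V ≃ₗᵢ[ℝ] V) : ℝ := ‖operatorHom A - 1‖

theorem deviation_nonneg (A : V ≃ₗᵢ[ℝ] V) : 0 ≤ deviation A := norm_nonneg _

theorem norm_apply_sub_le (A : V ≃ₗᵢ[ℝ] V) (x : V) : ‖A x - x‖ ≤ deviation A * ‖x‖ :=
  (operatorHom A - 1).le_opNorm x

theorem operatorHom_eq_one_iff {A : V ≃ₗᵢ[ℝ] V} : operatorHom A = 1 ↔ A = 1 :=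
  ⟨fun h => LinearIsometryEquiv.ext fun x => DFunLike.congr_fun h x, fun h => by rw [h, map_one]⟩

theorem deviation_eq_zero_iff {A : V ≃ₗᵢ[ℝ] V} : deviation A = 0 ↔ A = 1 := by
  rw [deviation, norm_eq_zero, sub_eq_zero, operatorHom_eq_one_iff]

theorem deviation_mul_inv_le (A B : V ≃ₗᵢ[ℝ] V) :
    deviation (A * B⁻¹) ≤ ‖operatorHom A - operatorHom B‖ := by
  have : operatorHom (A * B⁻¹) - 1 = (operatorHom A - operatorHom B) * operatorHom B⁻¹ := by
    rw [sub_mul, operatorHom_mul_inv, map_mul]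
  rw [deviation, this]
  exact norm_mul_operatorHom_le _ _

theorem deviation_conj_le (A B : V ≃ₗᵢ[ℝ] V) : deviation (A * B * A⁻¹) ≤ deviation B := by
  have : operatorHom (A * B * A⁻¹) - 1 =
      operatorHom A * (operatorHom B - 1) * operatorHom A⁻¹ := by
    rw [mul_sub, sub_mul, mul_one, operatorHom_mul_inv, map_mul, map_mul]
  rw [deviation, this]
  exact (norm_mul_operatorHom_le _ _).trans (norm_operatorHom_mul_le _ _)

theorem deviation_commutator_le (A B : V ≃ₗᵢ[ℝ] V) :
    deviation ⁅A, B⁆ ≤ 2 * deviation A * deviation B := by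
  set a := operatorHom A - 1 with ha
  set b := operatorHom B - 1 with hb
  have hAB : operatorHom (A * B) - operatorHom (B * A) = a * b - b * a := by
    rw [map_mul, map_mul, ha, hb]
    noncomm_ring
  calc deviation ⁅A, B⁆ = deviation (A * B * (B * A)⁻¹) := by
        rw [commutatorElement_def, mul_inv_rev, ← mul_assoc]
    _ ≤ ‖a * b - b * a‖ := hAB ▸ deviation_mul_inv_le _ _
    _ ≤ ‖a‖ * ‖b‖ + ‖b‖ * ‖a‖ :=
        (norm_sub_le _ _).trans (add_le_add (norm_mul_le _ _) (norm_mul_le _ _))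
    _ = 2 * deviation A * deviation B := by
        rw [deviation, deviation]
        ring

theorem deviation_commutator_le_two_mul (A B : V ≃ₗᵢ[ℝ] V) :
    deviation ⁅A, B⁆ ≤ 2 * deviation B :=
  calc deviation ⁅A, B⁆ ≤ ‖(operatorHom (A * B * A⁻¹) - 1) - (operatorHom B - 1)‖ := by
        rw [sub_sub_sub_cancel_right]
        exact deviation_mul_inv_le _ _
    _ ≤ deviation (A * B * A⁻¹) + deviation B := norm_sub_le _ _
    _ ≤ 2 * deviation B := by linarith [deviation_conj_le A B]

theorem commutator_eq_one_of_commute {A B : V ≃ₗᵢ[ℝ] V} (hB : deviation B < 1 / 2)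
    (h : Commute A ⁅A, B⁆) : ⁅A, B⁆ = 1 := by
  refine operatorHom_eq_one_iff.1
    (eq_one_of_norm_pow_sub_one_le (δ := 2 * deviation B) (by linarith) fun n => ?_)
  rw [← map_pow, ← commutatorElement_pow_left h]
  exact deviation_commutator_le_two_mul _ _

-- If `d = A w - w` is fixed by `A`, then the bounded orbit of `w` consists of the `w + n • d`.
theorem apply_eq_self_of_apply_apply_sub {A : V ≃ₗᵢ[ℝ] V} {w : V}
    (h : A (A w - w) = A w - w) : A w = w := by
  set d := A w - w
  have horbit (n : ℕ) : (A ^ n) w = w + n • d := by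
    induction n with
    | zero => simp
    | succ n ih =>
      rw [pow_succ', LinearIsometryEquiv.coe_mul, Function.comp_apply, ih, map_add, map_nsmul, h,
        succ_nsmul', ← add_assoc, add_sub_cancel]
  have hbound (n : ℕ) : n • ‖d‖ ≤ 2 * ‖w‖ :=
    calc n • ‖d‖ = ‖(A ^ n) w - w‖ := by
          rw [horbit, add_sub_cancel_left, RCLike.norm_nsmul ℝ]
      _ ≤ 2 * ‖w‖ := (norm_sub_le _ _).trans (by rw [LinearIsometryEquiv.norm_map, two_mul])
  by_contra hne
  obtain ⟨n, hn⟩ := Archimedean.arch (2 * ‖w‖ + 1) (norm_pos_iff.2 (sub_ne_zero.2 hne))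
  linarith [hbound n]

end Deviation

section LinearPart

open scoped commutatorElement

variable {V : Type*} [NormedAddCommGroup V] [NormedSpace ℝ V]

/-- The linear part of a surjective isometry, which is affine by the Mazur–Ulam theorem. -/
def linearPart : (V ≃ᵢ V) →* (V ≃ₗᵢ[ℝ] V) :=
  MonoidHom.mk' IsometryEquiv.toRealLinearIsometryEquiv fun γ δ => by
    ext1 x
    have h : γ.toRealLinearIsometryEquiv (δ x - δ 0) = γ (δ x) - γ (δ 0) := by
      rw [map_sub]
      simp only [IsometryEquiv.toRealLinearIsometryEquiv_apply, sub_sub_sub_cancel_right]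
    rw [LinearIsometryEquiv.coe_mul, Function.comp_apply,
      IsometryEquiv.toRealLinearIsometryEquiv_apply δ, h]
    exact IsometryEquiv.toRealLinearIsometryEquiv_apply (γ * δ) x

theorem linearPart_apply (γ : V ≃ᵢ V) (x : V) : linearPart γ x = γ x - γ 0 :=
  IsometryEquiv.toRealLinearIsometryEquiv_apply γ x

theorem linearPart_sub (γ : V ≃ᵢ V) (x y : V) : linearPart γ (x - y) = γ x - γ y := by
  rw [map_sub, linearPart_apply, linearPart_apply, sub_sub_sub_cancel_right]

theorem apply_eq_linearPart_add (γ : V ≃ᵢ V) (x : V) : γ x = linearPart γ x + γ 0 := by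
  rw [linearPart_apply, sub_add_cancel]

theorem eq_one_of_linearPart_eq_one {γ : V ≃ᵢ V} {p : V} (h : linearPart γ = 1) (hp : γ p = p) :
    γ = 1 := by
  ext1 x
  have := linearPart_sub γ x p
  rw [h, hp] at this
  exact (sub_left_injective this).symm

theorem commutator_apply_zero (α β : V ≃ᵢ V) :
    ⁅α, β⁆ 0 = (linearPart α (β 0) - β 0) - (linearPart β (α 0) - α 0) -
      (linearPart ⁅α, β⁆ (β (α 0)) - β (α 0)) := by
  have h : ⁅α, β⁆ (β (α 0)) = α (β 0) := by
    rw [← IsometryEquiv.mul_apply, ← IsometryEquiv.mul_apply, ← IsometryEquiv.mul_apply,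
      commutatorElement_def]
    congr 1
    group
  rw [linearPart_apply ⁅α, β⁆, h, linearPart_apply, linearPart_apply]
  abel

theorem norm_commutator_apply_zero_le {α β : V ≃ᵢ V} {M : ℝ} (hα : deviation (linearPart α) ≤ 1 / 4)
    (hβ : deviation (linearPart β) ≤ 1 / 4) (hαM : ‖α 0‖ ≤ M) (hβM : ‖β 0‖ ≤ M) :
    ‖⁅α, β⁆ 0‖ ≤ M := by
  have hM : 0 ≤ M := (norm_nonneg _).trans hαM
  have hdev : deviation (linearPart ⁅α, β⁆) ≤ 1 / 8 := by
    rw [map_commutatorElement]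
    have := deviation_commutator_le (linearPart α) (linearPart β)
    nlinarith [deviation_nonneg (linearPart α)]
  have hbound {γ : V ≃ᵢ V} {c K : ℝ} {x : V} (hγ : deviation (linearPart γ) ≤ c) (hx : ‖x‖ ≤ K) :
      ‖linearPart γ x - x‖ ≤ c * K :=
    (norm_apply_sub_le _ _).trans
      (mul_le_mul hγ hx (norm_nonneg _) ((deviation_nonneg _).trans hγ))
  have hβα : ‖β (α 0)‖ ≤ M + M := by
    rw [apply_eq_linearPart_add]
    exact norm_add_le_of_le ((LinearIsometryEquiv.norm_map _ _).trans_le hαM) hβM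
  calc ‖⁅α, β⁆ 0‖ ≤ 1 / 4 * M + 1 / 4 * M + 1 / 8 * (M + M) := by
        rw [commutator_apply_zero]
        exact norm_sub_le_of_le (norm_sub_le_of_le (hbound hα hβM) (hbound hβ hαM))
          (hbound hdev hβα)
    _ ≤ M := by linarith

end LinearPart

section Translations

open scoped commutatorElement

variable {V : Type*} [NormedAddCommGroup V] [NormedSpace ℝ V]

theorem apply_eq_self_of_deviation_lt_one {L : AddSubgroup V}
    (hL : ∀ R : ℝ, {v | v ∈ L ∧ ‖v‖ ≤ R}.Finite) {A : V ≃ₗᵢ[ℝ] V} (hA : deviation A < 1)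
    (hAL : ∀ v ∈ L, A v ∈ L) {v : V} (hv : v ∈ L) : A v = v := by
  by_contra hne
  obtain ⟨w, ⟨⟨hwL, hwv⟩, hw⟩, hmin⟩ := Set.exists_min_image
    {w | (w ∈ L ∧ ‖w‖ ≤ ‖v‖) ∧ A w ≠ w} norm ((hL _).subset fun w h => h.1) ⟨v, ⟨hv, le_rfl⟩, hne⟩
  have hw0 : 0 < ‖w‖ := norm_pos_iff.2 fun h => hw (by rw [h, map_zero])
  have hlt : ‖A w - w‖ < ‖w‖ := (norm_apply_sub_le A w).trans_lt (mul_lt_of_lt_one_left hw0 hA)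
  refine hw (apply_eq_self_of_apply_apply_sub (by_contra fun h => ?_))
  exact (hmin _ ⟨⟨sub_mem (hAL w hwL) hwL, hlt.le.trans hwv⟩, h⟩).not_gt hlt

/-- The additive group of translation vectors of a group of isometries. -/
def translationLattice (Γ : Subgroup (V ≃ᵢ V)) : AddSubgroup V where
  carrier := {v | ∃ γ ∈ Γ, linearPart γ = 1 ∧ γ 0 = v}
  zero_mem' := ⟨1, one_mem Γ, map_one linearPart, rfl⟩
  add_mem' := by
    rintro _ _ ⟨γ, hγ, h, rfl⟩ ⟨δ, hδ, h', rfl⟩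
    refine ⟨γ * δ, mul_mem hγ hδ, by rw [map_mul, h, h', mul_one], ?_⟩
    rw [IsometryEquiv.mul_apply, apply_eq_linearPart_add, h, add_comm]
    rfl
  neg_mem' := by
    rintro _ ⟨γ, hγ, h, rfl⟩
    refine ⟨γ⁻¹, inv_mem hγ, by rw [map_inv, h, inv_one], eq_neg_of_add_eq_zero_left ?_⟩
    have := apply_eq_linearPart_add γ (γ⁻¹ 0)
    rw [IsometryEquiv.apply_inv_self, h] at this
    exact this.symm

variable {Γ : Subgroup (V ≃ᵢ V)}

theorem linearPart_mem_translationLattice {γ : V ≃ᵢ V} (hγ : γ ∈ Γ) {v : V}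
    (hv : v ∈ translationLattice Γ) : linearPart γ v ∈ translationLattice Γ := by
  obtain ⟨δ, hδ, h, rfl⟩ := hv
  refine ⟨γ * δ * γ⁻¹, mul_mem (mul_mem hγ hδ) (inv_mem hγ), ?_, ?_⟩
  · rw [map_mul, map_mul, h, mul_one, map_inv, mul_inv_cancel]
  · have := linearPart_sub γ (δ (γ⁻¹ 0)) (γ⁻¹ 0)
    rw [apply_eq_linearPart_add δ, h, LinearIsometryEquiv.coe_one, id, add_sub_cancel_left,
      IsometryEquiv.apply_inv_self, sub_zero] at this
    rw [IsometryEquiv.mul_apply, IsometryEquiv.mul_apply, apply_eq_linearPart_add δ, h, this]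
    rfl

theorem finite_translationLattice_le (hfin : ∀ R : ℝ, {γ | γ ∈ Γ ∧ ‖γ 0‖ ≤ R}.Finite) (R : ℝ) :
    {v | v ∈ translationLattice Γ ∧ ‖v‖ ≤ R}.Finite := by
  refine ((hfin R).image fun γ => γ 0).subset ?_
  rintro _ ⟨⟨γ, hγ, -, rfl⟩, h⟩
  exact ⟨γ, ⟨hγ, h⟩, rfl⟩

-- Taking the commutator with `α` halves the deviation, so a `β` of least deviation in a ball whose
-- linear part `B` does not commute with that of `α`, say `A`, satisfies `⁅A, ⁅A, B⁆⁆ = 1`.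
theorem linearPart_commutator_eq_one (hfin : ∀ R : ℝ, {γ | γ ∈ Γ ∧ ‖γ 0‖ ≤ R}.Finite)
    {α β : V ≃ᵢ V} (hα : α ∈ Γ) (hβ : β ∈ Γ) (hα' : deviation (linearPart α) ≤ 1 / 4)
    (hβ' : deviation (linearPart β) ≤ 1 / 4) : linearPart ⁅α, β⁆ = 1 := by
  by_contra hne
  obtain ⟨γ, ⟨⟨hγ, hγM⟩, hγ', hαγ⟩, hmin⟩ := Set.exists_min_image
    {γ | (γ ∈ Γ ∧ ‖γ 0‖ ≤ max ‖α 0‖ ‖β 0‖) ∧ deviation (linearPart γ) ≤ 1 / 4 ∧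
      linearPart ⁅α, γ⁆ ≠ 1} (fun γ => deviation (linearPart γ)) ((hfin _).subset fun γ h => h.1)
    ⟨β, ⟨hβ, le_max_right _ _⟩, hβ', hne⟩
  rw [map_commutatorElement] at hαγ
  have hpos : 0 < deviation (linearPart γ) := (deviation_nonneg _).lt_of_ne' fun h =>
    hαγ (by rw [deviation_eq_zero_iff.1 h, commutatorElement_one_right])
  have hlt : deviation (linearPart ⁅α, γ⁆) < deviation (linearPart γ) := by
    rw [map_commutatorElement]
    nlinarith [deviation_commutator_le (linearPart α) (linearPart γ)]
  have hmem : ⁅α, γ⁆ ∈ Γ := mul_mem (mul_mem (mul_mem hα hγ) (inv_mem hα)) (inv_mem hγ)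
  have hcomm : ⁅linearPart α, ⁅linearPart α, linearPart γ⁆⁆ = 1 := by
    rw [← map_commutatorElement, ← map_commutatorElement]
    by_contra h
    exact (hmin _ ⟨⟨hmem, norm_commutator_apply_zero_le hα' hγ' (le_max_left _ _) hγM⟩,
      hlt.le.trans hγ', h⟩).not_gt hlt
  exact hαγ (commutator_eq_one_of_commute (by linarith)
    (commutatorElement_eq_one_iff_commute.1 hcomm))

-- The finitely many linear parts needed to approximate all the others are corrected for by
-- multiplying with the inverses of fixed elements having these linear parts.
theorem exists_mem_deviation_le_near [FiniteDimensional ℝ V]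
    (hcov : ∃ R : ℝ, ∀ x, ∃ γ ∈ Γ, ‖γ 0 - x‖ ≤ R) {ε : ℝ} (hε : 0 < ε) :
    ∃ C : ℝ, ∀ x, ∃ γ ∈ Γ, deviation (linearPart γ) ≤ ε ∧ ‖γ 0 - x‖ ≤ C := by
  obtain ⟨R, hR⟩ := hcov
  have hbdd : TotallyBounded ((fun γ => operatorHom (linearPart γ)) '' (Γ : Set (V ≃ᵢ V))) :=
    (isCompact_closedBall (0 : V →L[ℝ] V) 1).totallyBounded.subset
      (Set.image_subset_iff.2 fun γ _ => mem_closedBall_zero_iff.2 (norm_operatorHom_le _))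
  obtain ⟨t, htΓ, ht, hcover⟩ := Set.exists_subset_image_finite_and.1
    (hbdd.exists_subset (Metric.dist_mem_uniformity hε))
  obtain ⟨M, hM⟩ := (ht.image fun δ => ‖δ⁻¹ 0‖).bddAbove
  refine ⟨M + R, fun x => ?_⟩
  obtain ⟨γ, hγ, hγx⟩ := hR x
  obtain ⟨_, ⟨δ, hδ, rfl⟩, hγδ⟩ := Set.mem_iUnion₂.1 (hcover ⟨γ, hγ, rfl⟩)
  refine ⟨γ * δ⁻¹, mul_mem hγ (inv_mem (htΓ hδ)), ?_, ?_⟩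
  · rw [map_mul, map_inv]
    exact (deviation_mul_inv_le _ _).trans ((dist_eq_norm _ _).symm.trans_lt hγδ).le
  · calc ‖γ (δ⁻¹ 0) - x‖ ≤ ‖γ (δ⁻¹ 0) - γ 0‖ + ‖γ 0 - x‖ := norm_sub_le_norm_sub_add_norm_sub _ _ _
      _ ≤ M + R := by
        rw [← dist_eq_norm, γ.dist_eq, dist_zero_right]
        exact add_le_add (hM ⟨δ, hδ, rfl⟩) hγx

theorem eq_zero_of_norm_apply_le_of_deviation_le [FiniteDimensional ℝ V]
    (hcov : ∃ R : ℝ, ∀ x, ∃ γ ∈ Γ, ‖γ 0 - x‖ ≤ R) {ε : ℝ} (hε : 0 < ε) {T : V →L[ℝ] V} {K : ℝ}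
    (hT : ∀ γ ∈ Γ, deviation (linearPart γ) ≤ ε → ‖T (γ 0)‖ ≤ K) : T = 0 := by
  obtain ⟨C, hC⟩ := exists_mem_deviation_le_near hcov hε
  have hbound (x : V) : ‖T x‖ ≤ ‖T‖ * C + K := by
    obtain ⟨γ, hγ, hγε, hγx⟩ := hC x
    calc ‖T x‖ = ‖T (x - γ 0) + T (γ 0)‖ := by rw [← map_add, sub_add_cancel]
      _ ≤ ‖T‖ * C + K :=
        norm_add_le_of_le (T.le_opNorm_of_le (by rwa [norm_sub_rev])) (hT γ hγ hγε)
  ext x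
  by_contra hx
  obtain ⟨n, hn⟩ := Archimedean.arch (‖T‖ * C + K + 1) (norm_pos_iff.2 hx)
  have := hbound (n • x)
  rw [map_nsmul, RCLike.norm_nsmul ℝ] at this
  linarith

-- Writing `A`, `B` for the linear parts of `α`, `β` and `a`, `b` for the images of `0`, the
-- commutator is the translation by `(A - 1) b - (B - 1) a`, which `A` fixes.
theorem linearPart_eq_one_of_deviation_le [FiniteDimensional ℝ V]
    (hfin : ∀ R : ℝ, {γ | γ ∈ Γ ∧ ‖γ 0‖ ≤ R}.Finite)
    (hcov : ∃ R : ℝ, ∀ x, ∃ γ ∈ Γ, ‖γ 0 - x‖ ≤ R) {α : V ≃ᵢ V} (hα : α ∈ Γ)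
    (hα' : deviation (linearPart α) ≤ 1 / 4) : linearPart α = 1 := by
  set A := linearPart α
  have hsq : (operatorHom A - 1) * (operatorHom A - 1) = 0 := by
    refine eq_zero_of_norm_apply_le_of_deviation_le hcov (ε := 1 / 4) (by norm_num)
      (K := 4 * ‖α 0‖) fun β hβ hβ' => ?_
    set B := linearPart β
    have htrans : linearPart ⁅α, β⁆ = 1 := linearPart_commutator_eq_one hfin hα hβ hα' hβ'
    have hfix : A (⁅α, β⁆ 0) = ⁅α, β⁆ 0 :=
      apply_eq_self_of_deviation_lt_one (finite_translationLattice_le hfin) (by linarith)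
        (fun _ => linearPart_mem_translationLattice hα)
        ⟨_, mul_mem (mul_mem (mul_mem hα hβ) (inv_mem hα)) (inv_mem hβ), htrans, rfl⟩
    rw [commutator_apply_zero, htrans, LinearIsometryEquiv.coe_one, id, sub_self, sub_zero, map_sub,
      sub_eq_sub_iff_sub_eq_sub] at hfix
    have hnorm (C : V ≃ₗᵢ[ℝ] V) (x : V) : ‖C x - x‖ ≤ 2 * ‖x‖ :=
      (norm_sub_le _ _).trans (by rw [C.norm_map, two_mul])
    calc ‖A (A (β 0) - β 0) - (A (β 0) - β 0)‖ = ‖A (B (α 0) - α 0) - (B (α 0) - α 0)‖ := by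
          rw [hfix]
      _ ≤ 2 * (2 * ‖α 0‖) := (hnorm _ _).trans (by gcongr; exact hnorm _ _)
      _ = 4 * ‖α 0‖ := by ring
  refine LinearIsometryEquiv.ext fun x => apply_eq_self_of_apply_apply_sub (sub_eq_zero.1 ?_)
  exact DFunLike.congr_fun hsq x

theorem exists_translationLattice_apply_ne [FiniteDimensional ℝ V]
    (hfin : ∀ R : ℝ, {γ | γ ∈ Γ ∧ ‖γ 0‖ ≤ R}.Finite)
    (hcov : ∃ R : ℝ, ∀ x, ∃ γ ∈ Γ, ‖γ 0 - x‖ ≤ R) {A : V ≃ₗᵢ[ℝ] V} (hA : A ≠ 1) :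
    ∃ b ∈ translationLattice Γ, A b ≠ b := by
  by_contra! h
  refine hA (operatorHom_eq_one_iff.1 (sub_eq_zero.1 ?_))
  refine eq_zero_of_norm_apply_le_of_deviation_le hcov (ε := 1 / 4) (by norm_num) (K := 0)
    fun γ hγ hγ' => norm_le_zero_iff.2 (sub_eq_zero.2 (h _ ⟨γ, hγ, ?_, rfl⟩))
  exact linearPart_eq_one_of_deviation_le hfin hcov hγ hγ'

end Translations

section CrystallographicRestriction

theorem circle_pow_eq_one_of_two_re_int {a : Circle} {k : ℤ} (hk : 2 * (a : ℂ).re = k) :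
    a ^ 4 = 1 ∨ a ^ 6 = 1 := by
  have hre := abs_le.1 ((Complex.abs_re_le_norm (a : ℂ)).trans_eq (Circle.norm_coe a))
  have hlo : -2 ≤ k := by exact_mod_cast (by linarith : (-2 : ℝ) ≤ k)
  have hhi : k ≤ 2 := by exact_mod_cast (by linarith : (k : ℝ) ≤ 2)
  have hsq : (a : ℂ) ^ 2 = k * a - 1 := by
    have hmul : (a : ℂ) * (starRingEnd ℂ) a = 1 := by
      rw [Complex.mul_conj, Circle.normSq_coe, Complex.ofReal_one]
    have hadd : (a : ℂ) + (starRingEnd ℂ) a = k := by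
      rw [Complex.add_conj, hk, Complex.ofReal_intCast]
    linear_combination (a : ℂ) * hadd - hmul
  suffices (a : ℂ) ^ 4 = 1 ∨ (a : ℂ) ^ 6 = 1 from
    this.imp (fun h => Circle.coe_injective (by simpa using h))
      fun h => Circle.coe_injective (by simpa using h)
  interval_cases k <;> push_cast at hsq
  · have h : (a : ℂ) = -1 :=
      eq_neg_of_add_eq_zero_left (sq_eq_zero_iff.1 (by linear_combination hsq))
    exact .inl (by rw [h]; norm_num)
  · exact .inr (by linear_combination ((a : ℂ) ^ 4 - a ^ 3 + a - 1) * hsq)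
  · exact .inl (by linear_combination ((a : ℂ) ^ 2 - 1) * hsq)
  · exact .inr (by linear_combination ((a : ℂ) ^ 4 + a ^ 3 - a - 1) * hsq)
  · have h : (a : ℂ) = 1 := sub_eq_zero.1 (sq_eq_zero_iff.1 (by linear_combination hsq))
    exact .inl (by rw [h]; norm_num)

theorem circle_pow_eq_one_of_mul_mem {L : AddSubgroup ℂ}
    (hfin : ∀ R : ℝ, {z | z ∈ L ∧ ‖z‖ ≤ R}.Finite) (hL : L ≠ ⊥) {a : Circle}
    (ha : ∀ z ∈ L, (a : ℂ) * z ∈ L) : a ^ 4 = 1 ∨ a ^ 6 = 1 := by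
  obtain ⟨x, hx, hx0⟩ := L.bot_or_exists_ne_zero.resolve_left hL
  obtain ⟨w, ⟨⟨hwL, hwx⟩, hw0⟩, hmin⟩ := Set.exists_min_image
    {z | (z ∈ L ∧ ‖z‖ ≤ ‖x‖) ∧ z ≠ 0} norm ((hfin _).subset fun z h => h.1)
    ⟨x, ⟨hx, le_rfl⟩, hx0⟩
  set c := 2 * (a : ℂ).re
  have htrace : (c : ℂ) * (a * w) = a * (a * w) + w := by
    have hadd : (a : ℂ) + (starRingEnd ℂ) a = c := Complex.add_conj _
    have hmul : (a : ℂ) * (starRingEnd ℂ) a = 1 := by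
      rw [Complex.mul_conj, Circle.normSq_coe, Complex.ofReal_one]
    linear_combination w * hmul - a * w * hadd
  have hmem : ((c - round c : ℝ) : ℂ) * (a * w) ∈ L := by
    rw [Complex.ofReal_sub, sub_mul, htrace, Complex.ofReal_intCast, ← zsmul_eq_mul]
    exact sub_mem (add_mem (ha _ (ha _ hwL)) hwL) (zsmul_mem (ha _ hwL) _)
  have hlt : ‖((c - round c : ℝ) : ℂ) * (a * w)‖ < ‖w‖ := by
    rw [norm_mul, norm_mul, Circle.norm_coe, one_mul, Complex.norm_real, Real.norm_eq_abs]
    exact mul_lt_of_lt_one_left (norm_pos_iff.2 hw0) ((abs_sub_round c).trans_lt (by norm_num))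
  refine circle_pow_eq_one_of_two_re_int (k := round c) (sub_eq_zero.1 ?_)
  by_contra hne
  refine (hmin _ ⟨⟨hmem, hlt.le.trans hwx⟩, ?_⟩).not_gt hlt
  exact mul_ne_zero (Complex.ofReal_ne_zero.2 hne) (mul_ne_zero (Circle.coe_ne_zero a) hw0)

theorem crystallographic_restriction {V : Type*} [NormedAddCommGroup V] [NormedSpace ℝ V]
    [FiniteDimensional ℝ V] {Γ : Subgroup (V ≃ᵢ V)}
    (hfin : ∀ R : ℝ, {γ | γ ∈ Γ ∧ ‖γ 0‖ ≤ R}.Finite)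
    (hcov : ∃ R : ℝ, ∀ x, ∃ γ ∈ Γ, ‖γ 0 - x‖ ≤ R) {γ : V ≃ᵢ V} (hγ : γ ∈ Γ)
    (ι : ℂ →ₗᵢ[ℝ] V) (hι : ∀ x, linearPart γ x - x ∈ Set.range ι) {a : Circle}
    (ha : ∀ z, linearPart γ (ι z) = ι (rotation a z)) : a ^ 4 = 1 ∨ a ^ 6 = 1 := by
  by_cases hγ1 : linearPart γ = 1
  · have ha1 : a = 1 := by
      have := ι.injective ((hγ1 ▸ ha 1 :))
      rw [rotation_apply, mul_one] at this
      exact Circle.coe_injective this.symm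
    exact .inl (by rw [ha1, one_pow])
  let L := (translationLattice Γ).comap (ι : ℂ →+ V)
  have hL (R : ℝ) : {z | z ∈ L ∧ ‖z‖ ≤ R}.Finite :=
    ((finite_translationLattice_le hfin R).preimage ι.injective.injOn).subset fun z hz =>
      ⟨hz.1, (ι.norm_map z).trans_le hz.2⟩
  refine circle_pow_eq_one_of_mul_mem hL ?_ fun z hz => ?_
  · obtain ⟨b, hb, hbne⟩ := exists_translationLattice_apply_ne hfin hcov hγ1
    obtain ⟨z, hz⟩ := hι b
    refine fun h => hbne (sub_eq_zero.1 ?_)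
    have hzL : z ∈ L := (hz ▸ sub_mem (linearPart_mem_translationLattice hγ hb) hb :)
    rw [← hz, (AddSubgroup.eq_bot_iff_forall _).1 h z hzL, map_zero]
  · exact (ha z ▸ linearPart_mem_translationLattice hγ hz :)

end CrystallographicRestriction

section PlaneRepresentation

theorem exists_hom_of_forall_apply_mem_range {G F V : Type*} [Group G] [NormedAddCommGroup F]
    [NormedSpace ℝ F] [NormedAddCommGroup V] [NormedSpace ℝ V] (A : G →* (V ≃ₗᵢ[ℝ] V))
    (ι : F →ₗᵢ[ℝ] V) (hA : ∀ g x, A g (ι x) ∈ Set.range ι) :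
    ∃ ρ : G →* (F ≃ₗᵢ[ℝ] F), ∀ g x, A g (ι x) = ι (ρ g x) := by
  choose ρ hρ using hA
  have hmul (g h : G) (x : F) : ρ (g * h) x = ρ g (ρ h x) :=
    ι.injective (by rw [hρ, hρ, hρ, map_mul]; rfl)
  have hone (x : F) : ρ 1 x = x := ι.injective (by rw [hρ, map_one]; rfl)
  refine ⟨MonoidHom.mk' (fun g =>
    { toFun := ρ g
      map_add' := fun x y => ι.injective (by simp only [hρ, map_add])
      map_smul' := fun c x => ι.injective (by simp only [hρ, map_smul, RingHom.id_apply])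
      invFun := ρ g⁻¹
      left_inv := fun x => by rw [← hmul, inv_mul_cancel, hone]
      right_inv := fun x => by rw [← hmul, mul_inv_cancel, hone]
      norm_map' := fun x => by
        change ‖ρ g x‖ = ‖x‖
        rw [← ι.norm_map, hρ, LinearIsometryEquiv.norm_map, ι.norm_map] })
    fun g h => LinearIsometryEquiv.ext (hmul g h), fun g x => (hρ g x).symm⟩

variable {V : Type*} [NormedAddCommGroup V] [InnerProductSpace ℝ V]

open scoped InnerProductSpace in
theorem apply_sub_mem_orthogonal_of_apply_eq {A : V ≃ₗᵢ[ℝ] V} {v : V} (hA : A v = v) (x : V) :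
    A x - x ∈ (ℝ ∙ v)ᗮ := by
  rw [Submodule.mem_orthogonal_singleton_iff_inner_right, inner_sub_right, sub_eq_zero]
  calc ⟪v, A x⟫_ℝ = ⟪A v, A x⟫_ℝ := by rw [hA]
    _ = ⟪v, x⟫_ℝ := A.inner_map_map v x

theorem exists_linearIsometry_range_eq_orthogonal [Fact (Module.finrank ℝ V = 2 + 1)] {v : V}
    (hv : v ≠ 0) : ∃ ι : ℂ →ₗᵢ[ℝ] V, Set.range ι = (ℝ ∙ v)ᗮ := by
  let e : ℂ ≃ₗᵢ[ℝ] (ℝ ∙ v)ᗮ := Complex.orthonormalBasisOneI.repr.trans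
    (OrthonormalBasis.fromOrthogonalSpanSingleton 2 hv).repr.symm
  refine ⟨(ℝ ∙ v)ᗮ.subtypeₗᵢ.comp e.toLinearIsometry, ?_⟩
  rw [LinearIsometry.coe_comp, LinearIsometryEquiv.coe_toLinearIsometry,
    e.surjective.range_comp]
  exact Subtype.range_coe

end PlaneRepresentation

section LineTranslations

-- A subgroup of the line in which bounded sets are finite is not densely ordered.
theorem exists_surjective_int_hom_ker_eq {G : Type*} [Group G] {s : G →* Multiplicative ℝ}
    (hfin : ∀ R : ℝ, {g | |(s g).toAdd| ≤ R}.Finite) (hs : s ≠ 1) :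
    ∃ τ : G →* Multiplicative ℤ, Function.Surjective τ ∧ τ.ker = s.ker := by
  have hdense : ¬ DenselyOrdered s.range := fun _ => by
    obtain ⟨g, hg⟩ : ∃ g, 1 < s g := by
      obtain ⟨g, hg⟩ := DFunLike.ne_iff.1 hs
      obtain h | h := lt_or_gt_of_ne hg
      · exact ⟨g⁻¹, by rwa [map_inv, Left.one_lt_inv_iff]⟩
      · exact ⟨g, h⟩
    refine Set.Ioo_infinite (show 1 < s.rangeRestrict g from hg)
      (((hfin (s g).toAdd).image s.rangeRestrict).subset ?_)
    rintro ⟨_, h, rfl⟩ ⟨h_pos, h_lt⟩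
    exact ⟨h, (abs_of_pos (a := (s h).toAdd) h_pos).trans_le (le_of_lt h_lt), rfl⟩
  obtain ⟨e⟩ := (LinearOrderedCommGroup.discrete_or_denselyOrdered s.range).resolve_right hdense
  refine ⟨e.toMulEquiv.toMonoidHom.comp s.rangeRestrict,
    e.surjective.comp s.rangeRestrict_surjective, ?_⟩
  exact (s.rangeRestrict.ker_mulEquiv_comp e.toMulEquiv).trans s.ker_rangeRestrict

theorem exists_apply_add_smul_eq {V : Type*} [AddCommGroup V] [Module ℝ V] {f : V → V} {p v w : V}
    (hp : ∃ t : ℝ, f p = p + t • v) (hw : ∀ t : ℝ, f (p + t • v) = p + t • v + w) :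
    ∃ r : ℝ, ∀ t : ℝ, f (p + t • v) = p + (t + r) • v := by
  obtain ⟨r, hr⟩ := hp
  have hwr : w = r • v := by
    have := hw 0
    rw [zero_smul, add_zero, hr] at this
    exact (add_left_cancel this).symm
  exact ⟨r, fun t => by rw [hw, hwr, add_smul, add_assoc]⟩

variable {V : Type*} [NormedAddCommGroup V] [NormedSpace ℝ V] {Γ G : Subgroup (V ≃ᵢ V)} {p v : V}

theorem exists_translation_hom (hv : v ≠ 0)
    (h : ∀ g ∈ G, ∃ r : ℝ, ∀ t : ℝ, g (p + t • v) = p + (t + r) • v) :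
    ∃ s : G →* Multiplicative ℝ,
      ∀ (g : G) (t : ℝ), (g : V ≃ᵢ V) (p + t • v) = p + (t + (s g).toAdd) • v := by
  choose s hs using fun g : G => h g g.2
  refine ⟨MonoidHom.mk' (fun g => .ofAdd (s g)) fun g h => ?_, hs⟩
  refine congrArg Multiplicative.ofAdd (smul_left_injective ℝ hv (add_left_cancel (a := p) ?_))
  calc p + s (g * h) • v = (g : V ≃ᵢ V) ((h : V ≃ᵢ V) (p + (0 : ℝ) • v)) := by
        rw [← zero_add (s (g * h)), ← hs]
        rfl
    _ = p + (s g + s h) • v := by rw [hs, hs, zero_add, add_comm (s h)]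

variable {s : G →* Multiplicative ℝ}
  (hs : ∀ (g : G) (t : ℝ), (g : V ≃ᵢ V) (p + t • v) = p + (t + (s g).toAdd) • v)
include hs

theorem apply_eq_add_smul (g : G) : (g : V ≃ᵢ V) p = p + (s g).toAdd • v := by
  simpa using hs g 0

theorem linearPart_apply_direction (g : G) : linearPart (g : V ≃ᵢ V) v = v := by
  have := linearPart_sub (g : V ≃ᵢ V) (p + (1 : ℝ) • v) p
  rwa [hs, apply_eq_add_smul hs, one_smul, add_sub_cancel_left, add_smul, one_smul,
    add_sub_add_left_eq_sub, add_sub_cancel_right] at this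

theorem finite_abs_translation_le (hfin : ∀ R : ℝ, {γ | γ ∈ Γ ∧ ‖γ 0‖ ≤ R}.Finite) (hGΓ : G ≤ Γ)
    (R : ℝ) : {g : G | |(s g).toAdd| ≤ R}.Finite := by
  refine .of_finite_image ((hfin (‖p‖ + (‖p‖ + R * ‖v‖))).subset ?_)
    Subtype.val_injective.injOn
  rintro _ ⟨g, hg, rfl⟩
  refine ⟨hGΓ g.2, ?_⟩
  calc ‖(g : V ≃ᵢ V) 0‖ = ‖((g : V ≃ᵢ V) 0 - (g : V ≃ᵢ V) p) + (p + (s g).toAdd • v)‖ := by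
        rw [← apply_eq_add_smul hs, sub_add_cancel]
    _ ≤ ‖p‖ + (‖p‖ + R * ‖v‖) := by
        refine norm_add_le_of_le ?_ (norm_add_le_of_le le_rfl ?_)
        · rw [← dist_eq_norm, IsometryEquiv.dist_eq, dist_zero_left]
        · rw [norm_smul]
          gcongr
          exact hg

theorem translation_hom_ne_one (hv : v ≠ 0) {K : Set V} (hK : Bornology.IsBounded K)
    (hKG : ∀ t : ℝ, ∃ g ∈ G, g (p + t • v) ∈ K) : s ≠ 1 := by
  rintro rfl
  obtain ⟨R, hR⟩ := hK.subset_closedBall p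
  obtain ⟨t, ht⟩ := Archimedean.arch (R + 1) (norm_pos_iff.2 hv)
  obtain ⟨g, hg, hgK⟩ := hKG t
  have hdist := hR hgK
  rw [show g (p + (t : ℝ) • v) = p + (t : ℝ) • v by simpa using hs ⟨g, hg⟩ t,
    mem_closedBall_iff_norm, add_sub_cancel_left, Nat.cast_smul_eq_nsmul,
    RCLike.norm_nsmul ℝ] at hdist
  linarith

end LineTranslations

section LineStabilizer

theorem finite_norm_apply_zero_le_of_isCrystallographic {n : ℕ}
    {Γ : Subgroup (Isom n)} (hΓ : IsCrystallographic Γ) (R : ℝ) :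
    {γ | γ ∈ Γ ∧ ‖γ 0‖ ≤ R}.Finite := by
  refine (hΓ.1 {0} (Metric.closedBall 0 R) isCompact_singleton
    (isCompact_closedBall 0 R)).subset ?_
  rintro γ ⟨hγ, h⟩
  exact ⟨hγ, γ 0, ⟨0, rfl, rfl⟩, mem_closedBall_zero_iff.2 h⟩

theorem exists_norm_apply_zero_sub_le_of_isCrystallographic {n : ℕ}
    {Γ : Subgroup (Isom n)} (hΓ : IsCrystallographic Γ) :
    ∃ R : ℝ, ∀ x, ∃ γ ∈ Γ, ‖γ 0 - x‖ ≤ R := by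
  obtain ⟨K, hK, hcov⟩ := hΓ.2
  obtain ⟨R, hR⟩ := hK.isBounded.subset_closedBall 0
  refine ⟨R, fun x => ?_⟩
  obtain ⟨γ, hγ, hx⟩ := hcov x
  refine ⟨γ⁻¹, inv_mem hγ, ?_⟩
  rw [← dist_eq_norm, ← γ.dist_eq, IsometryEquiv.apply_inv_self, dist_zero_left]
  exact mem_closedBall_zero_iff.1 (hR hx)

theorem exists_mulEquiv_sdZ_of_translation_hom {Γ G : Subgroup (Isom 3)}
    (hΓ : IsCrystallographic Γ) (hGΓ : G ≤ Γ) {p v : E 3} (hv : v ≠ 0)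
    {s : G →* Multiplicative ℝ} (hs_one : s ≠ 1)
    (hs : ∀ (g : G) (t : ℝ), (g : Isom 3) (p + t • v) = p + (t + (s g).toAdd) • v) :
    ∃ n ∈ ({1, 2, 3, 4, 6} : Set ℕ), (∃ ψ, Nonempty (G ≃* SdZ (Zc n) ψ)) ∨
      ∃ ψ : MulAut (DihedralGroup n), ψ (.r 1) ∈ Subgroup.zpowers (.r 1) ∧
        Nonempty (G ≃* SdZ (DihedralGroup n) ψ) := by
  have hfin := finite_norm_apply_zero_le_of_isCrystallographic hΓ
  have hsfin := finite_abs_translation_le hs hfin hGΓ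
  obtain ⟨τ, hτ, hker⟩ := exists_surjective_int_hom_ker_eq hsfin hs_one
  have hfinite : Finite τ.ker := ((hsfin 0).subset fun g (hg : g ∈ τ.ker) => by
    rw [hker, MonoidHom.mem_ker] at hg
    simp [hg]).to_subtype
  have : Fact (Module.finrank ℝ (E 3) = 2 + 1) := ⟨finrank_euclideanSpace_fin⟩
  obtain ⟨ι, hι⟩ := exists_linearIsometry_range_eq_orthogonal hv
  have hplane (g : G) (x : E 3) : linearPart (g : Isom 3) x - x ∈ Set.range ι := by
    rw [hι]
    exact apply_sub_mem_orthogonal_of_apply_eq (linearPart_apply_direction hs g) x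
  obtain ⟨ρ, hρ⟩ := exists_hom_of_forall_apply_mem_range (linearPart.comp G.subtype) ι fun g x => by
    obtain ⟨z, hz⟩ := hplane g (ι x)
    exact ⟨z + x, by rw [map_add, hz, sub_add_cancel]; rfl⟩
  have hfaithful : ∀ g ∈ τ.ker, ρ g = 1 → g = 1 := fun g hg h => by
    rw [hker, MonoidHom.mem_ker] at hg
    refine Subtype.ext (eq_one_of_linearPart_eq_one (p := p)
      (LinearIsometryEquiv.ext fun x => ?_) ?_)
    · obtain ⟨z, hz⟩ := hplane g x
      exact apply_eq_self_of_apply_apply_sub (hz ▸ (hρ g z).trans (by rw [h]; rfl))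
    · rw [apply_eq_add_smul hs, hg, toAdd_one, zero_smul, add_zero]
  refine exists_mulEquiv_sdZ_of_planar hτ ρ hfaithful fun g hg ⟨c, hc⟩ => ?_
  have hrot : ∀ z, linearPart (g : Isom 3) (ι z) = ι (rotation c z) := hc ▸ hρ g
  refine (crystallographic_restriction hfin (exists_norm_apply_zero_sub_le_of_isCrystallographic hΓ)
    (hGΓ g.2) ι (hplane g) hrot).imp (fun h => hfaithful _ (pow_mem hg 4) ?_)
    fun h => hfaithful _ (pow_mem hg 6) ?_ <;>
  rw [map_pow, ← hc, ← map_pow, h, map_one]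

end LineStabilizer

/-- Proposition 3.3. Let `Γ` be a 3-crystallographic group and `G ≤ Γ` a
subgroup leaving a line `l` invariant and acting on `l` cocompactly and purely by translations.
Then `G` is isomorphic to one of the fifteen listed groups, where in each semidirect product
`F ⋊_φ ℤ` the automorphism `φ` represents the nontrivial element of `Out F` (for cyclic `F`,
inversion; for `D₂`, an element of order 2 of `Out D₂ = Aut D₂`; for `D₄`, `D₆`, a non-inner
automorphism). -/
theorem translation_action_classification
    (Γ G : Subgroup (Isom 3)) (hΓ : IsCrystallographic Γ) (hGΓ : G ≤ Γ)
    (l : Set (E 3)) (hl : IsLine l)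
    (hinv : ∀ g ∈ G, g '' l = l)
    (hcc : ∃ K : Set (E 3), IsCompact K ∧ K ⊆ l ∧ ∀ x ∈ l, ∃ g ∈ G, g x ∈ K)
    (htrans : ∀ g ∈ G, ∃ v : E 3, ∀ x ∈ l, g x = x + v) :
    Nonempty (G ≃* Multiplicative ℤ) ∨
    Nonempty (G ≃* (Zc 2 × Multiplicative ℤ)) ∨
    Nonempty (G ≃* (Zc 3 × Multiplicative ℤ)) ∨
    Nonempty (G ≃* SdZ (Zc 3) (MulEquiv.inv (Zc 3))) ∨
    Nonempty (G ≃* (Zc 4 × Multiplicative ℤ)) ∨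
    Nonempty (G ≃* SdZ (Zc 4) (MulEquiv.inv (Zc 4))) ∨
    Nonempty (G ≃* (Zc 6 × Multiplicative ℤ)) ∨
    Nonempty (G ≃* SdZ (Zc 6) (MulEquiv.inv (Zc 6))) ∨
    Nonempty (G ≃* (DihedralGroup 2 × Multiplicative ℤ)) ∨
    (∃ ψ : MulAut (DihedralGroup 2), orderOf ψ = 2 ∧ Nonempty (G ≃* SdZ (DihedralGroup 2) ψ)) ∨
    Nonempty (G ≃* (DihedralGroup 3 × Multiplicative ℤ)) ∨
    Nonempty (G ≃* (DihedralGroup 4 × Multiplicative ℤ)) ∨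
    (∃ ψ : MulAut (DihedralGroup 4), ¬ IsInner ψ ∧ Nonempty (G ≃* SdZ (DihedralGroup 4) ψ)) ∨
    Nonempty (G ≃* (DihedralGroup 6 × Multiplicative ℤ)) ∨
    (∃ ψ : MulAut (DihedralGroup 6), ¬ IsInner ψ ∧ Nonempty (G ≃* SdZ (DihedralGroup 6) ψ)) := by
  obtain ⟨p, v, hv, rfl⟩ := hl
  obtain ⟨K, hK, -, hKG⟩ := hcc
  obtain ⟨s, hs⟩ := exists_translation_hom (G := G) hv fun g hg => by
    obtain ⟨w, hw⟩ := htrans g hg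
    exact exists_apply_add_smul_eq ((hinv g hg).subset ⟨p, ⟨0, by simp⟩, rfl⟩)
      fun t => hw _ ⟨t, rfl⟩
  have hs_one := translation_hom_ne_one hs hv hK.isBounded fun t => hKG _ ⟨t, rfl⟩
  obtain ⟨n, hn, h⟩ := exists_mulEquiv_sdZ_of_translation_hom hΓ hGΓ hv hs_one hs
  rcases h with ⟨ψ, ⟨e⟩⟩ | ⟨ψ, hψ, ⟨e⟩⟩ <;> obtain rfl | rfl | rfl | rfl | rfl := hn
  · simp only [nonempty_mulEquiv_int e, true_or]
  · simp only [nonempty_mulEquiv_zc_two_prod e, true_or, or_true]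
  · obtain h | h := nonempty_mulEquiv_prod_or_sdZ_inv (by decide) e <;> simp [h]
  · obtain h | h := nonempty_mulEquiv_prod_or_sdZ_inv (by decide) e <;> simp [h]
  · obtain h | h := nonempty_mulEquiv_prod_or_sdZ_inv (by decide) e <;> simp [h]
  · simp only [nonempty_mulEquiv_zc_two_prod_of_dihedralGroup_one e, true_or, or_true]
  · obtain h | h := nonempty_mulEquiv_prod_or_orderOf_eq_two hψ e <;> simp [h]
  · simp only [nonempty_mulEquiv_dihedralGroup_three_prod e, true_or, or_true]
  · obtain h | h := nonempty_mulEquiv_prod_or_not_isInner e <;> simp [h]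
  · obtain h | h := nonempty_mulEquiv_prod_or_not_isInner e <;> simp [h]
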